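/- Let f be holomorphic on a polyannulus \mathcal{P} = \{z \in \mathbb{C}^n : r_j < |z_j| < R_j \text{ or } |z_j| < R_j\} with all derivatives D^\alpha f (\alpha \in \mathbb{N}^n, \max_j \alpha_j \le 2) bounded, and let c_\gamma be its Laurent coefficients. Define \mu_\ell = 1/(\ell(\ell-1)) for \ell \neq 0,1 and \mu_\ell = 1 for \ell \in \{0,1\}. Then for every \alpha \in \mathbb{Z}^n and all z \in \mathcal{P}, |c_\alpha z^\alpha| \le (\prod_{j=1}^n \mu_{\alpha_j}) \cdot (\prod_{j=1}^n (1 + R_j^2)) \cdot \sup\{|D^\beta f(w)| : w \in \mathcal{P}, \max_j \beta_j \le 2\}. -/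

import Mathlib

open Filter Topology

/-- The holomorphic partial derivative in the `j`-th coordinate direction. -/
noncomputable def pderivC {n : ℕ} (j : Fin n) (f : (Fin n → ℂ) → ℂ) : (Fin n → ℂ) → ℂ :=
  fun z => fderiv ℂ f z (Pi.single j 1)

/-- The iterated holomorphic partial derivative `D^α f` of multi-order `α`. -/
noncomputable def Dmulti {n : ℕ} (α : Fin n → ℕ) (f : (Fin n → ℂ) → ℂ) : (Fin n → ℂ) → ℂ :=
  (List.finRange n).foldr (fun j g => (pderivC j)^[α j] g) f

/-- `Ω` is a Reinhardt set: invariant under unimodular rotations of the coordinates. -/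
def IsReinhardt {n : ℕ} (Ω : Set (Fin n → ℂ)) : Prop :=
  ∀ z ∈ Ω, ∀ lam : Fin n → ℂ, (∀ j, ‖lam j‖ = 1) → (fun j => lam j * z j) ∈ Ω

/-- The polyannulus determined by radii `r`, `R` and a choice, for each coordinate,
of annulus (`b j = true`) or disc (`b j = false`). -/
def polyann {n : ℕ} (r R : Fin n → ℝ) (b : Fin n → Bool) : Set (Fin n → ℂ) :=
  {z | ∀ j, if b j then r j < ‖z j‖ ∧ ‖z j‖ < R j else ‖z j‖ < R j}

/-- `f` is holomorphic on `Ω` and smooth up to the boundary: every iterated holomorphic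
derivative of `f` is holomorphic on `Ω` and extends continuously to the closure. -/
def AInfinity {n : ℕ} (Ω : Set (Fin n → ℂ)) (f : (Fin n → ℂ) → ℂ) : Prop :=
  DifferentiableOn ℂ f Ω ∧
    ∀ α : Fin n → ℕ, DifferentiableOn ℂ (Dmulti α f) Ω ∧
      ∃ g : (Fin n → ℂ) → ℂ, ContinuousOn g (closure Ω) ∧ Set.EqOn (Dmulti α f) g Ω

/-- The sup-seminorm `‖f‖_{k,Ω}` over derivatives of total order at most `k`. -/
noncomputable def snormTotal {n : ℕ} (k : ℕ) (Ω : Set (Fin n → ℂ))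
    (f : (Fin n → ℂ) → ℂ) : ℝ :=
  sSup {x | ∃ α : Fin n → ℕ, ∃ z ∈ Ω, (∑ j, α j) ≤ k ∧ x = ‖Dmulti α f z‖}

/-- The sup-seminorm `‖f‖'_{k,Ω}` over derivatives of order at most `k` in each variable. -/
noncomputable def snormMax {n : ℕ} (k : ℕ) (Ω : Set (Fin n → ℂ))
    (f : (Fin n → ℂ) → ℂ) : ℝ :=
  sSup {x | ∃ α : Fin n → ℕ, ∃ z ∈ Ω, (∀ j, α j ≤ k) ∧ x = ‖Dmulti α f z‖}

/-- `μ_ℓ`: `1/(ℓ(ℓ-1))` for `ℓ ≠ 0,1` and `1` for `ℓ ∈ {0,1}`. -/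
noncomputable def mu (l : ℤ) : ℝ :=
  if l = 0 ∨ l = 1 then 1 else 1 / ((l : ℝ) * ((l : ℝ) - 1))


open MeasureTheory in
lemma fourier_bound {n : ℕ} (b : (Fin n → ℤ) → ℂ) (hb : Summable (fun γ => ‖b γ‖))
    (α : Fin n → ℤ) (M : ℝ)
    (h : ∀ t : Fin n → AddCircle (1:ℝ),
      ‖∑' γ, b γ * ∏ j, (fourier (γ j - α j) (t j) : ℂ)‖ ≤ M) : ‖b α‖ ≤ M := by
  set ν : Measure (Fin n → AddCircle (1:ℝ)) :=
    Measure.pi (fun _ => AddCircle.haarAddCircle) with hν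
  have hcont : ∀ γ : Fin n → ℤ, Continuous
      (fun t : Fin n → AddCircle (1:ℝ) => b γ * ∏ j, (fourier (γ j - α j) (t j) : ℂ)) := by
    intro γ
    fun_prop
  have hnorm : ∀ γ (t : Fin n → AddCircle (1:ℝ)),
      ‖b γ * ∏ j, (fourier (γ j - α j) (t j) : ℂ)‖ = ‖b γ‖ := by
    intro γ t
    have : ∀ (k : ℤ) (x : AddCircle (1:ℝ)), ‖(fourier k x : ℂ)‖ = 1 := fun k x => by
      rw [fourier_apply]; exact Circle.norm_coe _
    rw [norm_mul, norm_prod]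
    simp only [this, Finset.prod_const_one, mul_one]
  have hint : ∀ γ, Integrable
      (fun t : Fin n → AddCircle (1:ℝ) => b γ * ∏ j, (fourier (γ j - α j) (t j) : ℂ)) ν := by
    intro γ
    refine Integrable.of_bound (hcont γ).aestronglyMeasurable (‖b γ‖) ?_
    exact Filter.Eventually.of_forall fun t => (hnorm γ t).le
  have hval : ∀ γ, ∫ t, b γ * ∏ j, (fourier (γ j - α j) (t j) : ℂ) ∂ν =
      if γ = α then b α else 0 := by
    intro γ
    rw [integral_const_mul, hν,
      integral_fintype_prod_eq_prod (fun j x => (fourier (γ j - α j) x : ℂ))]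
    have h1 : ∀ k : ℤ, ∫ x : AddCircle (1:ℝ), (fourier k x : ℂ) ∂AddCircle.haarAddCircle =
        if k = 0 then 1 else 0 := by
      intro k
      have := congrFun (fourierCoeff_fourier (T := (1:ℝ)) k) 0
      simp only [fourierCoeff, neg_zero, fourier_zero, one_smul] at this
      rw [this]
      by_cases hk : k = 0
      · subst hk; simp
      · rw [if_neg hk, Pi.single_eq_of_ne (Ne.symm hk)]
    simp only [h1]
    split_ifs with hg
    · subst hg; simp
    · obtain ⟨i, hi⟩ := Function.ne_iff.mp hg
      rw [Finset.prod_eq_zero (Finset.mem_univ i), mul_zero]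
      rw [if_neg]
      exact sub_ne_zero.mpr hi
  have hs := hasSum_integral_of_summable_integral_norm hint (by
    simp only [hnorm]
    simpa [hν] using hb)
  simp only [hval] at hs
  have h2 := (hasSum_ite_eq α (b α)).unique hs
  rw [h2]
  refine (norm_integral_le_of_norm_le_const (Filter.Eventually.of_forall h)).trans ?_
  simp

def annU {n : ℕ} (lo R : Fin n → ℝ) : Set (Fin n → ℂ) :=
  {z | ∀ j, lo j < ‖z j‖ ∧ ‖z j‖ < R j}

lemma annU_open {n : ℕ} (lo R : Fin n → ℝ) : IsOpen (annU lo R) := by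
  have : annU lo R = ⋂ j, {z : Fin n → ℂ | lo j < ‖z j‖ ∧ ‖z j‖ < R j} := by
    ext z; simp [annU]
  rw [this]
  refine isOpen_iInter_of_finite fun j => ?_
  have hc : Continuous fun z : Fin n → ℂ => ‖z j‖ := by fun_prop
  exact (isOpen_lt continuous_const hc).inter (isOpen_lt hc continuous_const)

lemma zpow_le_add {x ρ₁ ρ₂ : ℝ} (h0 : 0 < ρ₁) (h1 : ρ₁ ≤ x) (h2 : x ≤ ρ₂) (k : ℤ) :
    x ^ k ≤ ρ₁ ^ k + ρ₂ ^ k := by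
  have hx : 0 < x := h0.trans_le h1
  have hρ : 0 < ρ₂ := hx.trans_le h2
  rcases le_total 0 k with hk | hk
  · have := zpow_le_zpow_left₀ hk hx.le h2
    have := zpow_pos h0 k
    linarith
  · have := zpow_le_zpow_left₀ (n := -k) (by omega) h0.le h1
    rw [zpow_neg, zpow_neg, inv_le_inv₀ (zpow_pos h0 k) (zpow_pos hx k)] at this
    have := zpow_pos hρ k
    linarith

lemma hasSum_pderiv {n : ℕ} {ι : Type*} (lo R : Fin n → ℝ) (hlo : ∀ j, 0 ≤ lo j)
    (a : ι → ℂ) (e : ι → Fin n → ℤ) (g : (Fin n → ℂ) → ℂ)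
    (hg : DifferentiableOn ℂ g (annU lo R))
    (hs : ∀ z ∈ annU lo R, HasSum (fun γ => a γ * ∏ j, z j ^ e γ j) (g z)) (i : Fin n)
    (z : Fin n → ℂ) (hz : z ∈ annU lo R) :
    HasSum (fun γ => a γ * e γ i * ∏ j, z j ^ (Function.update (e γ) i (e γ i - 1)) j)
      (pderivC i g z) := by
  obtain ⟨ρ₁, h11, h12⟩ := exists_between (hz i).1
  obtain ⟨ρ₂, h21, h22⟩ := exists_between (hz i).2
  have hρ₁ : 0 < ρ₁ := (hlo i).trans_lt h11
  have hρ₂ : 0 < ρ₂ := hρ₁.trans (h12.trans h21)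
  have hmem : ∀ ζ : ℂ, lo i < ‖ζ‖ → ‖ζ‖ < R i → Function.update z i ζ ∈ annU lo R := by
    intro ζ h1 h2 j
    by_cases hj : j = i
    · subst hj; simp [h1, h2]
    · simpa [Function.update_of_ne hj] using hz j
  set K : ι → ℂ := fun γ => a γ * ∏ j ∈ Finset.univ.erase i, z j ^ e γ j with hK
  have hprod : ∀ (ζ : ℂ) (v : Fin n → ℤ), ∏ j, (Function.update z i ζ) j ^ v j =
      ζ ^ v i * ∏ j ∈ Finset.univ.erase i, z j ^ v j := by
    intro ζ v
    rw [← Finset.mul_prod_erase _ _ (Finset.mem_univ i)]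
    simp only [Function.update_self]
    congr 1
    refine Finset.prod_congr rfl fun j hj => ?_
    rw [Function.update_of_ne (Finset.ne_of_mem_erase hj)]
  have hF : ∀ ζ : ℂ, lo i < ‖ζ‖ → ‖ζ‖ < R i →
      HasSum (fun γ => K γ * ζ ^ e γ i) (g (Function.update z i ζ)) := by
    intro ζ h1 h2
    have := hs _ (hmem ζ h1 h2)
    refine this.congr_fun ?_ |> fun h => h
    intro γ
    rw [hprod, hK]; ring
  set V : Set ℂ := {ζ | ρ₁ < ‖ζ‖ ∧ ‖ζ‖ < ρ₂} with hV
  have hVo : IsOpen V :=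
    (isOpen_lt continuous_const continuous_norm).inter (isOpen_lt continuous_norm continuous_const)
  have hsum : ∀ ρ : ℝ, 0 < ρ → lo i < ρ → ρ < R i → Summable (fun γ => ‖K γ‖ * ρ ^ e γ i) := by
    intro ρ hρ h1 h2
    have hn : ‖(ρ : ℂ)‖ = ρ := by simp [abs_of_pos hρ]
    have := (hF ρ (by rwa [hn]) (by rwa [hn])).summable.norm
    simpa [norm_mul, norm_zpow, abs_of_pos hρ] using this
  have hzV : z i ∈ V := ⟨h12, h21⟩
  have hzi : z i ≠ 0 := by
    intro h; rw [h, norm_zero] at h12; linarith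
  have key := Complex.hasSum_deriv_of_summable_norm (F := fun γ ζ => K γ * ζ ^ e γ i)
    (U := V) (z := z i) ((hsum ρ₁ hρ₁ h11 (h12.trans (hz i).2)).add
      (hsum ρ₂ hρ₂ ((hz i).1.trans h21) h22))
    (by
      intro γ ζ hζ
      have : ζ ≠ 0 := by
        rintro rfl
        have := hζ.1
        simp at this; linarith
      exact ((differentiableAt_zpow.mpr (Or.inl this)).const_mul _).differentiableWithinAt)
    hVo
    (by
      intro γ ζ hζ
      rw [norm_mul, norm_zpow, ← mul_add]
      exact mul_le_mul_of_nonneg_left (zpow_le_add hρ₁ hζ.1.le hζ.2.le _) (norm_nonneg _))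
    hzV
  have hd : deriv (fun w : ℂ => ∑' γ, K γ * w ^ e γ i) (z i) = pderivC i g z := by
    have h1 : (fun w : ℂ => ∑' γ, K γ * w ^ e γ i) =ᶠ[𝓝 (z i)]
        fun w => g (Function.update z i w) := by
      filter_upwards [hVo.mem_nhds hzV] with w hw
      exact (hF w (h11.trans hw.1) (hw.2.trans h22)).tsum_eq
    rw [h1.deriv_eq]
    have h2 : HasFDerivAt g (fderiv ℂ g z) (Function.update z i (z i)) := by
      rw [Function.update_eq_self]
      exact (hg.differentiableAt ((annU_open lo R).mem_nhds hz)).hasFDerivAt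
    exact (h2.comp_hasDerivAt (z i) (hasDerivAt_update z i (z i))).deriv
  rw [hd] at key
  refine key.congr_fun ?_ |> fun h => h
  intro γ
  rw [deriv_const_mul_field, deriv_zpow]
  have := hprod (z i) (Function.update (e γ) i (e γ i - 1))
  rw [Function.update_eq_self] at this
  rw [this, Function.update_self, hK]
  have h3 : ∏ j ∈ Finset.univ.erase i, z j ^ (Function.update (e γ) i (e γ i - 1)) j =
      ∏ j ∈ Finset.univ.erase i, z j ^ e γ j :=
    Finset.prod_congr rfl fun j hj => by
      rw [Function.update_of_ne (Finset.ne_of_mem_erase hj)]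
  rw [h3]; ring

lemma foldr_zero {n : ℕ} (β : Fin n → ℕ) (L : List (Fin n)) (h : ∀ j ∈ L, β j = 0)
    (f : (Fin n → ℂ) → ℂ) : L.foldr (fun j g => (pderivC j)^[β j] g) f = f := by
  induction L with
  | nil => rfl
  | cons a L ih =>
    rw [List.foldr_cons, ih fun j hj => h j (List.mem_cons_of_mem _ hj), h a (by simp)]
    rfl

lemma foldr_update {n : ℕ} (β : Fin n → ℕ) (i : Fin n) (k : ℕ) (L : List (Fin n))
    (h : ∀ j ∈ L, j ≠ i) (f : (Fin n → ℂ) → ℂ) :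
    L.foldr (fun j g => (pderivC j)^[Function.update β i k j] g) f =
      L.foldr (fun j g => (pderivC j)^[β j] g) f := by
  induction L with
  | nil => rfl
  | cons a L ih =>
    rw [List.foldr_cons, List.foldr_cons, ih fun j hj => h j (List.mem_cons_of_mem _ hj),
      Function.update_of_ne (h a (by simp))]

lemma Dmulti_update {n : ℕ} (β : Fin n → ℕ) (i : Fin n) (hβ : ∀ j < i, β j = 0)
    (f : (Fin n → ℂ) → ℂ) : ∃ F, ∀ k, Dmulti (Function.update β i k) f = (pderivC i)^[k] F := by
  obtain ⟨L₁, L₂, hL⟩ := List.append_of_mem (List.mem_finRange i)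
  have hs : (List.finRange n).Pairwise (· < ·) := List.pairwise_lt_finRange n
  rw [hL, List.pairwise_append, List.pairwise_cons] at hs
  refine ⟨L₂.foldr (fun j g => (pderivC j)^[β j] g) f, fun k => ?_⟩
  unfold Dmulti
  rw [hL, List.foldr_append, List.foldr_cons, foldr_update _ _ _ L₂, Function.update_self,
    foldr_zero]
  · intro j hj
    have hji : j < i := hs.2.2 j hj i (by simp)
    rw [Function.update_of_ne hji.ne]
    exact hβ j hji
  · intro j hj
    exact (hs.2.1.1 j hj).ne'

lemma Dmulti_zero {n : ℕ} (f : (Fin n → ℂ) → ℂ) : Dmulti (fun _ => 0) f = f :=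
  foldr_zero _ _ (fun _ _ => rfl) f

noncomputable def dfac (k : ℕ) (x : ℤ) : ℂ := ∏ m ∈ Finset.range k, ((x : ℂ) - m)

def SerD {n : ℕ} (lo R : Fin n → ℝ) (c : (Fin n → ℤ) → ℂ) (f : (Fin n → ℂ) → ℂ)
    (β : Fin n → ℕ) : Prop :=
  ∀ z ∈ annU lo R, HasSum (fun γ : Fin n → ℤ =>
    (c γ * ∏ j, dfac (β j) (γ j)) * ∏ j, z j ^ (γ j - (β j : ℤ))) (Dmulti β f z)

lemma SerD_step {n : ℕ} (lo R : Fin n → ℝ) (hlo : ∀ j, 0 ≤ lo j) (c : (Fin n → ℤ) → ℂ)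
    (f : (Fin n → ℂ) → ℂ) (hf : ∀ β, DifferentiableOn ℂ (Dmulti β f) (annU lo R))
    (β : Fin n → ℕ) (i : Fin n) (hβ : ∀ j < i, β j = 0) (k : ℕ)
    (h : SerD lo R c f (Function.update β i k)) :
    SerD lo R c f (Function.update β i (k + 1)) := by
  intro z hz
  obtain ⟨F, hF⟩ := Dmulti_update β i hβ f
  have h1 := hasSum_pderiv lo R hlo
    (fun γ : Fin n → ℤ => c γ * ∏ j, dfac (Function.update β i k j) (γ j))
    (fun γ j => γ j - (Function.update β i k j : ℤ)) _ (hf _) h i z hz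
  have h2 : pderivC i (Dmulti (Function.update β i k) f) =
      Dmulti (Function.update β i (k + 1)) f := by
    rw [hF, hF, Function.iterate_succ_apply']
  rw [h2] at h1
  refine h1.congr_fun ?_ |> fun h => h
  intro γ
  congr 1
  · have h3 : ∀ m, ∏ j, dfac (Function.update β i m j) (γ j) =
        dfac m (γ i) * ∏ j ∈ Finset.univ.erase i, dfac (β j) (γ j) := by
      intro m
      rw [← Finset.mul_prod_erase _ _ (Finset.mem_univ i), Function.update_self]
      congr 1
      exact Finset.prod_congr rfl fun j hj => by
        rw [Function.update_of_ne (Finset.ne_of_mem_erase hj)]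
    rw [h3, h3, Function.update_self]
    have : dfac (k + 1) (γ i) = dfac k (γ i) * ((γ i : ℂ) - k) := Finset.prod_range_succ _ _
    rw [this]
    push_cast
    ring
  · refine Finset.prod_congr rfl fun j _ => ?_
    congr 1
    by_cases hj : j = i
    · subst hj; simp; ring
    · simp [Function.update_of_ne hj]

lemma SerD_all {n : ℕ} (lo R : Fin n → ℝ) (hlo : ∀ j, 0 ≤ lo j) (c : (Fin n → ℤ) → ℂ)
    (f : (Fin n → ℂ) → ℂ) (hf : ∀ β, DifferentiableOn ℂ (Dmulti β f) (annU lo R))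
    (hc : ∀ z ∈ annU lo R, HasSum (fun γ : Fin n → ℤ => c γ * ∏ j, z j ^ γ j) (f z))
    (β : Fin n → ℕ) : SerD lo R c f β := by
  have main : ∀ m ≤ n, SerD lo R c f (fun j => if n - m ≤ (j : ℕ) then β j else 0) := by
    intro m
    induction m with
    | zero =>
      intro _ z hz
      have : (fun j : Fin n => if n - 0 ≤ (j : ℕ) then β j else 0) = fun _ => 0 := by
        funext j
        rw [if_neg]; have := j.2; omega
      rw [this, Dmulti_zero]
      simpa [dfac] using hc z hz
    | succ m ih =>
      intro hm
      have ih := ih (by omega)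
      set β' : Fin n → ℕ := fun j => if n - m ≤ (j : ℕ) then β j else 0 with hβ'
      let i : Fin n := ⟨n - (m + 1), by omega⟩
      have hz : ∀ j < i, β' j = 0 := by
        intro j hj
        have : (j : ℕ) < n - (m + 1) := hj
        simp only [hβ']
        rw [if_neg]; omega
      have h0 : Function.update β' i 0 = β' := by
        rw [Function.update_eq_self_iff]
        simp only [hβ', i]
        rw [if_neg]; omega
      have h1 : (fun j : Fin n => if n - (m + 1) ≤ (j : ℕ) then β j else 0) =
          Function.update β' i (β i) := by
        funext j
        by_cases hj : j = i
        · subst hj; simp [i]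
        · rw [Function.update_of_ne hj]
          have : (j : ℕ) ≠ n - (m + 1) := fun h => hj (Fin.ext h)
          simp only [hβ']
          congr 1
          apply propext
          omega
      rw [h1]
      have h2 : ∀ k, SerD lo R c f (Function.update β' i k) := by
        intro k
        induction k with
        | zero => rwa [h0]
        | succ k ihk => exact SerD_step lo R hlo c f hf β' i hz k ihk
      exact h2 _
  simpa using main n le_rfl

lemma coeff_bound {n : ℕ} (lo R : Fin n → ℝ) (hlo : ∀ j, 0 ≤ lo j) (c : (Fin n → ℤ) → ℂ)
    (f : (Fin n → ℂ) → ℂ) (hf : ∀ β, DifferentiableOn ℂ (Dmulti β f) (annU lo R))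
    (hc : ∀ z ∈ annU lo R, HasSum (fun γ : Fin n → ℤ => c γ * ∏ j, z j ^ γ j) (f z))
    (β : Fin n → ℕ) (M : ℝ) (hM : ∀ w ∈ annU lo R, ‖Dmulti β f w‖ ≤ M)
    (α : Fin n → ℤ) (z : Fin n → ℂ) (hz : z ∈ annU lo R) :
    ‖(c α * ∏ j, dfac (β j) (α j)) * ∏ j, z j ^ (α j - (β j : ℤ))‖ ≤ M := by
  have hS := SerD_all lo R hlo c f hf hc β
  have hn : ∀ (k : ℤ) (x : AddCircle (1:ℝ)), ‖(fourier k x : ℂ)‖ = 1 := fun k x => by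
      rw [fourier_apply]; exact Circle.norm_coe _
  refine fourier_bound (fun γ : Fin n → ℤ =>
    (c γ * ∏ j, dfac (β j) (γ j)) * ∏ j, z j ^ (γ j - (β j : ℤ))) (hS z hz).summable.norm α M ?_
  intro t
  have hw : (fun j => z j * (fourier 1 (t j) : ℂ)) ∈ annU lo R := by
    intro j
    simp only [norm_mul, hn, mul_one]
    exact hz j
  have h1 := (hS _ hw).mul_right (∏ j, (fourier ((β j : ℤ) - α j) (t j) : ℂ))
  have hpow : ∀ (k : ℤ) (x : AddCircle (1:ℝ)), (fourier 1 x : ℂ) ^ k = fourier k x := by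
    intro k x
    simp only [fourier_apply, one_smul, AddCircle.toCircle_zsmul, Circle.coe_zpow]
  have h2 : ∀ γ : Fin n → ℤ, ((c γ * ∏ j, dfac (β j) (γ j)) *
      ∏ j, (z j * (fourier 1 (t j) : ℂ)) ^ (γ j - (β j : ℤ))) *
        (∏ j, (fourier ((β j : ℤ) - α j) (t j) : ℂ)) =
      ((c γ * ∏ j, dfac (β j) (γ j)) * ∏ j, z j ^ (γ j - (β j : ℤ))) *
        ∏ j, (fourier (γ j - α j) (t j) : ℂ) := by
    intro γ
    generalize c γ * ∏ j, dfac (β j) (γ j) = C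
    rw [mul_assoc, mul_assoc, ← Finset.prod_mul_distrib, ← Finset.prod_mul_distrib]
    congr 1
    refine Finset.prod_congr rfl fun j _ => ?_
    rw [mul_zpow, hpow, mul_assoc, ← fourier_add]
    congr 3
    ring
  simp only [h2] at h1
  rw [h1.tsum_eq, norm_mul, norm_prod]
  simp only [hn, Finset.prod_const_one, mul_one]
  exact hM _ hw

lemma mu_nonneg' (l : ℤ) : 0 ≤ mu l := by
  unfold mu
  split_ifs with h
  · exact zero_le_one
  · push Not at h
    apply div_nonneg zero_le_one
    have : 0 ≤ l * (l - 1) := by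
      rcases lt_or_gt_of_ne h.1 with h1 | h1
      · nlinarith
      · apply mul_nonneg <;> omega
    exact_mod_cast this

lemma factor_bound (l : ℤ) (x : ℂ) (hx : x ≠ 0) (R : ℝ) (hR : ‖x‖ < R) :
    ‖x ^ l‖ ≤ mu l * (1 + R ^ 2) *
      ‖dfac (if l = 0 ∨ l = 1 then 0 else 2) l *
        x ^ (l - ((if l = 0 ∨ l = 1 then 0 else 2 : ℕ) : ℤ))‖ := by
  have hmu := mu_nonneg' l
  unfold mu at hmu ⊢
  split_ifs with h
  · simp only [dfac, Finset.range_zero, Finset.prod_empty, one_mul, Nat.cast_zero, sub_zero]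
    have := norm_nonneg (x ^ l)
    nlinarith [sq_nonneg R]
  · rw [if_neg h] at hmu
    push Not at h
    have hx0 : 0 < ‖x‖ := norm_pos_iff.mpr hx
    have hl0 : (l : ℝ) ≠ 0 := by exact_mod_cast h.1
    have hl1 : (l : ℝ) - 1 ≠ 0 := by
      have : (l : ℝ) ≠ 1 := by exact_mod_cast h.2
      exact sub_ne_zero.mpr this
    have hd : ‖dfac 2 l‖ = (l : ℝ) * ((l : ℝ) - 1) := by
      have : dfac 2 l = (((l : ℝ) * ((l : ℝ) - 1) : ℝ) : ℂ) := by
        simp [dfac, Finset.prod_range_succ]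
      rw [this, Complex.norm_real, Real.norm_of_nonneg]
      exact one_div_nonneg.mp hmu
    have hp : x ^ l = x ^ (l - ((2 : ℕ) : ℤ)) * x ^ 2 := by
      rw [zpow_sub₀ hx]
      simp [hx]
    rw [norm_mul, hd, hp, norm_mul, norm_pow]
    have e : 1 / ((l : ℝ) * ((l : ℝ) - 1)) * (1 + R ^ 2) *
        ((l : ℝ) * ((l : ℝ) - 1) * ‖x ^ (l - ((2 : ℕ) : ℤ))‖) =
        ‖x ^ (l - ((2 : ℕ) : ℤ))‖ * (1 + R ^ 2) := by
      field_simp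
    rw [e]
    apply mul_le_mul_of_nonneg_left _ (norm_nonneg _)
    nlinarith

/-- Coefficient estimate on a polyannulus (case `k = 0` of the key proposition):
`|c_α z^α| ≤ (∏ μ_{α_j}) (∏ (1+R_j²)) · sup{|D^β f| : max β_j ≤ 2}`. -/
theorem stmt5 {n : ℕ} (r R : Fin n → ℝ) (b : Fin n → Bool)
    (hrR : ∀ j, 0 < r j ∧ r j < R j)
    (f : (Fin n → ℂ) → ℂ) (hf : AInfinity (polyann r R b) f)
    (c : (Fin n → ℤ) → ℂ)
    (hc : ∀ z ∈ polyann r R b,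
      HasSum (fun γ : Fin n → ℤ => c γ * ∏ j, z j ^ γ j) (f z))
    (M : ℝ)
    (hM : ∀ β : Fin n → ℕ, (∀ j, β j ≤ 2) →
      ∀ w ∈ polyann r R b, ‖Dmulti β f w‖ ≤ M)
    (α : Fin n → ℤ) (z : Fin n → ℂ) (hz : z ∈ polyann r R b) :
    ‖c α * ∏ j, z j ^ α j‖ ≤ (∏ j, mu (α j)) * (∏ j, (1 + R j ^ 2)) * M := by
  classical
  set lo : Fin n → ℝ := fun j => if b j then r j else 0 with hlodef
  have hlo : ∀ j, 0 ≤ lo j := by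
    intro j
    simp only [hlodef]
    split_ifs
    · exact (hrR j).1.le
    · exact le_rfl
  have hsub : annU lo R ⊆ polyann r R b := by
    intro w hw j
    have := hw j
    simp only [hlodef] at this
    by_cases hb : b j = true
    · simpa [hb] using this
    · simpa [hb] using this.2
  have hM0 : 0 ≤ M := (norm_nonneg _).trans (hM (fun _ => 0) (by simp) z hz)
  have hR : ∀ j, 0 ≤ 1 + R j ^ 2 := fun j => by positivity
  have hmu : 0 ≤ ∏ j, mu (α j) := Finset.prod_nonneg fun j _ => mu_nonneg' _
  have hRp : 0 ≤ ∏ j, (1 + R j ^ 2) := Finset.prod_nonneg fun j _ => hR j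
  have main : ∀ w ∈ annU lo R,
      ‖c α * ∏ j, w j ^ α j‖ ≤ (∏ j, mu (α j)) * (∏ j, (1 + R j ^ 2)) * M := by
    intro w hw
    set β : Fin n → ℕ := fun j => if α j = 0 ∨ α j = 1 then 0 else 2 with hβ
    have hβ2 : ∀ j, β j ≤ 2 := by
      intro j
      simp only [hβ]
      split_ifs <;> omega
    have h1 := coeff_bound lo R hlo c f (fun β => (hf.2 β).1.mono hsub)
      (fun z hz => hc z (hsub hz)) β M (fun w hw => hM β hβ2 w (hsub hw)) α w hw
    rw [mul_assoc, ← Finset.prod_mul_distrib, norm_mul, norm_prod] at h1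
    rw [norm_mul, norm_prod, ← Finset.prod_mul_distrib]
    have h2 : ∏ j, ‖w j ^ α j‖ ≤ ∏ j, (mu (α j) * (1 + R j ^ 2) *
        ‖dfac (β j) (α j) * w j ^ (α j - (β j : ℤ))‖) := by
      refine Finset.prod_le_prod (fun j _ => norm_nonneg _) fun j _ => ?_
      refine factor_bound (α j) (w j) ?_ (R j) (hw j).2
      have := (hlo j).trans_lt (hw j).1
      exact norm_pos_iff.mp this
    rw [Finset.prod_mul_distrib] at h2
    have h3 : 0 ≤ ∏ j, (mu (α j) * (1 + R j ^ 2)) :=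
      Finset.prod_nonneg fun j _ => mul_nonneg (mu_nonneg' _) (hR j)
    calc _ ≤ ‖c α‖ * _ := mul_le_mul_of_nonneg_left h2 (norm_nonneg _)
      _ = (∏ j, (mu (α j) * (1 + R j ^ 2))) *
        (‖c α‖ * ∏ j, ‖dfac (β j) (α j) * w j ^ (α j - (β j : ℤ))‖) := by ring
      _ ≤ _ := mul_le_mul_of_nonneg_left h1 h3
  by_cases hex : ∃ j, z j = 0 ∧ α j ≠ 0
  · obtain ⟨j, hj, hα⟩ := hex
    rw [Finset.prod_eq_zero (Finset.mem_univ j) (by rw [hj, zero_zpow _ hα]), mul_zero, norm_zero]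
    exact mul_nonneg (mul_nonneg hmu hRp) hM0
  · push Not at hex
    set w : Fin n → ℂ := fun j => if z j = 0 then ((R j / 2 : ℝ) : ℂ) else z j with hwdef
    have hw : w ∈ annU lo R := by
      intro j
      have hj := hz j
      have hRj : 0 < R j := (hrR j).1.trans (hrR j).2
      simp only [hwdef, hlodef]
      by_cases hz0 : z j = 0
      · rw [if_pos hz0, Complex.norm_real, Real.norm_of_nonneg (by linarith)]
        by_cases hb : b j = true
        · rw [if_pos hb, hz0, norm_zero] at hj
          have := (hrR j).1
          exact absurd hj.1 (by linarith)
        · rw [if_neg hb]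
          constructor <;> linarith
      · rw [if_neg hz0]
        by_cases hb : b j = true
        · rw [if_pos hb] at hj ⊢
          exact hj
        · rw [if_neg hb] at hj ⊢
          exact ⟨norm_pos_iff.mpr hz0, hj⟩
    have heq : ∏ j, z j ^ α j = ∏ j, w j ^ α j := by
      refine Finset.prod_congr rfl fun j _ => ?_
      simp only [hwdef]
      split_ifs with h0
      · rw [hex j h0, zpow_zero, zpow_zero]
      · rfl
    rw [heq]
    exact main w hw
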